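/- Let H be a real Hilbert space, C ⊆ H a nonempty closed convex set, and F : [0,∞) → H right-differentiable at t = 0 with derivative F'(0) (i.e. (F(t) − F(0))/t → F'(0) strongly as t → 0⁺). Define u(t) := proj_C(F(t)), set u₀ := u(0) and y := F(0) − u₀ (so y ∈ N_C(u₀)). If C is polyhedric at u₀ for y, then the map t ↦ u(t) is right-differentiable at t = 0 and its derivative is u'(0) = proj_{T_C(u₀) ∩ (ℝy)^⊥}(F'(0)), the metric projection of F'(0) onto the nonempty closed convex cone T_C(u₀) ∩ (ℝy)^⊥. -/

import Mathlib

open Filter Topology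
open scoped RealInnerProductSpace

/-- The tangent cone to a convex set `C` at `x`:
the closure of `{z | ∃ λ > 0, x + λ z ∈ C}`. -/
def tangentConeSet {H : Type*} [NormedAddCommGroup H] [InnerProductSpace ℝ H]
    (C : Set H) (x : H) : Set H :=
  closure {z | ∃ l : ℝ, 0 < l ∧ x + l • z ∈ C}

/-- `C` is polyhedric at `x ∈ C` for `y ∈ N_C(x)` if
`T_C(x) ∩ (ℝy)^⊥ = closure ({z | ∃ λ > 0, x + λ z ∈ C} ∩ (ℝy)^⊥)`. -/
def Polyhedric {H : Type*} [NormedAddCommGroup H] [InnerProductSpace ℝ H]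
    (C : Set H) (x y : H) : Prop :=
  tangentConeSet C x ∩ {z | ⟪z, y⟫ = 0}
    = closure ({z | ∃ l : ℝ, 0 < l ∧ x + l • z ∈ C} ∩ {z | ⟪z, y⟫ = 0})

/-- `IsProj C x u` means `u` is the metric projection of `x` onto `C`:
`u ∈ C` and `u` is at minimal distance from `x` among points of `C`. -/
def IsProj {H : Type*} [NormedAddCommGroup H] [InnerProductSpace ℝ H]
    (C : Set H) (x u : H) : Prop :=
  u ∈ C ∧ ∀ w ∈ C, ‖x - u‖ ≤ ‖x - w‖

/-!
Put `q t = (F t - F 0) / t`. Rescaling the minimality of `u t` shows that `v t = (u t - u 0) / t`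
minimises `‖q t - z‖² - (2 / t) ⟪z, y⟫` over the directions `z` that stay in `C` for the step `t`.
Since `⟪·, y⟫ ≤ 0` on the tangent cone `T`, the last term is a penalty; it forces `⟪v t, y⟫ → 0`,
so `v t` eventually lies in each of the closed convex sets `T ∩ {z | -δ ≤ ⟪z, y⟫}`, which decrease
to the critical cone `T ∩ (ℝy)^⊥` as `δ → 0`. Comparing with feasible `z ⊥ y`, which polyhedricity
makes dense in the critical cone, shows, as `q t → F'`, that `‖F' - v t‖` is asymptotically at most
the distance from `F'` to that cone. Finally, projections onto a decreasing sequence of closed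
convex sets converge to the projection onto the intersection, and by Pythagoras' inequality so do
all asymptotic minimisers.
-/

section

variable {H : Type*} [NormedAddCommGroup H] [InnerProductSpace ℝ H] {C : Set H} {x p : H}

lemma isProj_iff_norm_eq_iInf : IsProj C x p ↔ p ∈ C ∧ ‖x - p‖ = ⨅ c : C, ‖x - c‖ := by
  refine and_congr_right fun hp => ?_
  have : Nonempty C := ⟨⟨p, hp⟩⟩
  have hbdd : BddBelow (Set.range fun c : C => ‖x - c‖) :=
    ⟨0, Set.forall_mem_range.2 fun _ => norm_nonneg _⟩
  constructor
  · exact fun hmin => le_antisymm (le_ciInf fun c => hmin c c.2) (ciInf_le hbdd ⟨p, hp⟩)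
  · exact fun hmin c hc => hmin ▸ ciInf_le hbdd ⟨c, hc⟩

namespace IsProj

lemma inner_sub_sub_nonpos (hC : Convex ℝ C) (hp : IsProj C x p) {c : H} (hc : c ∈ C) :
    ⟪x - p, c - p⟫ ≤ 0 :=
  (norm_eq_iInf_iff_real_inner_le_zero hC hp.1).1 (isProj_iff_norm_eq_iInf.1 hp).2 c hc

lemma norm_sub_sq_add_norm_sub_sq_le (hC : Convex ℝ C) (hp : IsProj C x p) {c : H} (hc : c ∈ C) :
    ‖x - p‖ ^ 2 + ‖c - p‖ ^ 2 ≤ ‖x - c‖ ^ 2 := by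
  have hexpand := norm_sub_sq_real (x - p) (c - p)
  rw [sub_sub_sub_cancel_right] at hexpand
  linarith [hp.inner_sub_sub_nonpos hC hc]

lemma eq_of_norm_sub_le (hC : Convex ℝ C) (hp : IsProj C x p) {c : H} (hc : c ∈ C)
    (hle : ‖x - c‖ ≤ ‖x - p‖) : c = p := by
  have hpyth := hp.norm_sub_sq_add_norm_sub_sq_le hC hc
  have hsq : ‖x - c‖ ^ 2 ≤ ‖x - p‖ ^ 2 := by gcongr
  have hzero : ‖c - p‖ ^ 2 = 0 := le_antisymm (by linarith) (sq_nonneg _)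
  exact sub_eq_zero.1 (norm_eq_zero.1 (sq_eq_zero_iff.1 hzero))

lemma exists_of_isClosed [CompleteSpace H] (hne : C.Nonempty) (hcl : IsClosed C)
    (hC : Convex ℝ C) (x : H) : ∃ p, IsProj C x p := by
  obtain ⟨p, hp⟩ := exists_norm_eq_iInf_of_complete_convex hne hcl.isComplete hC x
  exact ⟨p, isProj_iff_norm_eq_iInf.2 hp⟩

section DecreasingSets

variable [CompleteSpace H] {ι κ : Type*} [Nonempty ι] [SemilatticeSup ι] {S : ι → Set H}

theorem tendsto_of_antitone (hS : Antitone S) (hcl : ∀ n, IsClosed (S n))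
    (hconv : ∀ n, Convex ℝ (S n)) (hp : IsProj (⋂ n, S n) x p) {q : ι → H}
    (hq : ∀ n, IsProj (S n) x (q n)) : Tendsto q atTop (𝓝 p) := by
  have hle : ∀ n, ‖x - q n‖ ≤ ‖x - p‖ := fun n => (hq n).2 p (Set.mem_iInter.1 hp.1 n)
  have hmono : Monotone fun n => ‖x - q n‖ ^ 2 := fun m n hmn => by
    have := (hq m).2 _ (hS hmn (hq n).1)
    dsimp only
    gcongr
  have hbdd : BddAbove (Set.range fun n => ‖x - q n‖ ^ 2) :=
    ⟨‖x - p‖ ^ 2, Set.forall_mem_range.2 fun n => by gcongr; exact hle n⟩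
  set L := ⨆ n, ‖x - q n‖ ^ 2
  have hlim : Tendsto (fun n => √(L - ‖x - q n‖ ^ 2)) atTop (𝓝 0) := by
    have hsub := (tendsto_atTop_ciSup hmono hbdd).const_sub L
    rw [show (⨆ n, ‖x - q n‖ ^ 2) = L from rfl, sub_self] at hsub
    simpa only [Real.sqrt_zero] using hsub.sqrt
  have hcauchy : CauchySeq q := by
    refine cauchySeq_of_le_tendsto_0' _ (fun m n hmn => ?_) hlim
    have hpyth := (hq m).norm_sub_sq_add_norm_sub_sq_le (hconv m) (hS hmn (hq n).1)
    have hL : ‖x - q n‖ ^ 2 ≤ L := le_ciSup hbdd n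
    rw [dist_comm, dist_eq_norm]
    exact Real.le_sqrt_of_sq_le (by linarith)
  obtain ⟨r, hr⟩ := cauchySeq_tendsto_of_complete hcauchy
  have hrS : r ∈ ⋂ n, S n := Set.mem_iInter.2 fun n =>
    (hcl n).mem_of_tendsto hr ((eventually_ge_atTop n).mono fun m hnm => hS hnm (hq m).1)
  have hrle : ‖x - r‖ ≤ ‖x - p‖ := le_of_tendsto' (hr.const_sub x).norm hle
  rwa [hp.eq_of_norm_sub_le (convex_iInter hconv) hrS hrle] at hr

theorem tendsto_of_eventually_mem_of_eventually_norm_sub_lt (hS : Antitone S)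
    (hcl : ∀ n, IsClosed (S n)) (hconv : ∀ n, Convex ℝ (S n)) (hp : IsProj (⋂ n, S n) x p)
    {l : Filter κ} {v : κ → H} (hvS : ∀ n, ∀ᶠ i in l, v i ∈ S n)
    (hv : ∀ r, ‖x - p‖ < r → ∀ᶠ i in l, ‖x - v i‖ < r) : Tendsto v l (𝓝 p) := by
  choose q hq using fun n =>
    exists_of_isClosed ⟨p, Set.mem_iInter.1 hp.1 n⟩ (hcl n) (hconv n) x
  have hqp : Tendsto q atTop (𝓝 p) := hp.tendsto_of_antitone hS hcl hconv hq
  refine Metric.tendsto_nhds.2 fun ε hε => ?_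
  obtain ⟨n, hnp, hnx⟩ : ∃ n, dist (q n) p < ε / 2 ∧ ‖x - p‖ ^ 2 - ε ^ 2 / 8 < ‖x - q n‖ ^ 2 :=
    ((Metric.tendsto_nhds.1 hqp _ (half_pos hε)).and
      (((hqp.const_sub x).norm.pow 2).eventually_const_lt (sub_lt_self _ (by positivity)))).exists
  have hr : ‖x - p‖ < √(‖x - p‖ ^ 2 + ε ^ 2 / 8) :=
    Real.lt_sqrt_of_sq_lt (lt_add_of_pos_right _ (by positivity))
  filter_upwards [hvS n, hv _ hr] with i hi hlt
  have hsq : ‖x - v i‖ ^ 2 < ‖x - p‖ ^ 2 + ε ^ 2 / 8 := (Real.lt_sqrt (norm_nonneg _)).1 hlt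
  have hpyth := (hq n).norm_sub_sq_add_norm_sub_sq_le (hconv n) hi
  have hvq : dist (v i) (q n) < ε / 2 := by
    rw [dist_eq_norm]
    exact lt_of_pow_lt_pow_left₀ 2 (half_pos hε).le (by linarith)
  linarith [dist_triangle (v i) (q n) p]

end DecreasingSets

lemma mul_norm_sub_sq_le {q v z : H} {t : ℝ} (ht : 0 < t)
    (hv : IsProj C (x + t • q) (p + t • v)) (hz : p + t • z ∈ C) (hzx : ⟪z, x - p⟫ = 0) :
    t * ‖q - v‖ ^ 2 ≤ t * ‖q - z‖ ^ 2 + 2 * ⟪v, x - p⟫ := by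
  have hexpand : ∀ a : H, ‖x + t • q - (p + t • a)‖ ^ 2 =
      ‖x - p‖ ^ 2 + 2 * t * (⟪q, x - p⟫ - ⟪a, x - p⟫) + t ^ 2 * ‖q - a‖ ^ 2 := fun a => by
    rw [show x + t • q - (p + t • a) = (x - p) + t • (q - a) by module, norm_add_sq_real,
      norm_smul, inner_smul_right, real_inner_comm, inner_sub_left, mul_pow, Real.norm_eq_abs,
      sq_abs]
    ring
  have hmin : ‖x + t • q - (p + t • v)‖ ^ 2 ≤ ‖x + t • q - (p + t • z)‖ ^ 2 := by
    gcongr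
    exact hv.2 _ hz
  rw [hexpand, hexpand, hzx] at hmin
  refine le_of_mul_le_mul_left ?_ ht
  linarith

end IsProj

/-- The cone of feasible directions of `C` at `p`, whose closure is `tangentConeSet C p`. -/
def feasibleDirections (C : Set H) (p : H) : Set H :=
  {z | ∃ l : ℝ, 0 < l ∧ p + l • z ∈ C}

lemma zero_mem_feasibleDirections (hp : p ∈ C) : 0 ∈ feasibleDirections C p :=
  ⟨1, one_pos, by simpa using hp⟩

lemma convex_feasibleDirections (hC : Convex ℝ C) (p : H) :
    Convex ℝ (feasibleDirections C p) := by
  have hcone : feasibleDirections C p = ConvexCone.hull ℝ ((p + ·) ⁻¹' C) := by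
    ext z
    rw [SetLike.mem_coe, ConvexCone.mem_hull_of_convex (hC.translate_preimage_right p)]
    constructor
    · rintro ⟨l, hl, hlz⟩
      exact ⟨l⁻¹, inv_pos.2 hl, l • z, hlz, inv_smul_smul₀ hl.ne' z⟩
    · rintro ⟨l, hl, c, hc, rfl⟩
      exact ⟨l⁻¹, inv_pos.2 hl, by rwa [inv_smul_smul₀ hl.ne']⟩
  exact hcone ▸ ConvexCone.convex _

lemma convex_tangentConeSet (hC : Convex ℝ C) (p : H) : Convex ℝ (tangentConeSet C p) :=
  (convex_feasibleDirections hC p).closure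

lemma eventually_add_smul_mem_of_mem_feasibleDirections (hC : Convex ℝ C) (hp : p ∈ C) {z : H}
    (hz : z ∈ feasibleDirections C p) : ∀ᶠ t in 𝓝[>] (0 : ℝ), p + t • z ∈ C := by
  obtain ⟨s, hs, hsz⟩ := hz
  filter_upwards [Ioo_mem_nhdsGT hs] with t ⟨ht, hts⟩
  have hmem := hC.add_smul_mem hp hsz (t := t / s) ⟨by positivity, (div_le_one hs).2 hts.le⟩
  rwa [smul_smul, div_mul_cancel₀ _ hs.ne'] at hmem

lemma IsProj.inner_nonpos_of_mem_tangentConeSet (hC : Convex ℝ C) (hp : IsProj C x p) {z : H}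
    (hz : z ∈ tangentConeSet C p) : ⟪z, x - p⟫ ≤ 0 := by
  refine closure_minimal ?_ (isClosed_le (by fun_prop) continuous_const :
    IsClosed {z | ⟪z, x - p⟫ ≤ 0}) hz
  rintro z ⟨l, hl, hlz⟩
  have hnonpos := hp.inner_sub_sub_nonpos hC hlz
  rw [add_sub_cancel_left, inner_smul_right, real_inner_comm] at hnonpos
  exact nonpos_of_mul_nonpos_right hnonpos hl

lemma exists_isProj_tangentConeSet_inter [CompleteSpace H] (hC : Convex ℝ C) (hp : p ∈ C)
    (y h : H) : ∃ w, IsProj (tangentConeSet C p ∩ {z | ⟪z, y⟫ = 0}) h w := by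
  refine IsProj.exists_of_isClosed ?_ ?_ ?_ h
  · exact ⟨0, subset_closure (zero_mem_feasibleDirections hp), inner_zero_left y⟩
  · exact isClosed_closure.inter (isClosed_eq (by fun_prop) continuous_const)
  · exact (convex_tangentConeSet hC p).inter
      (convex_hyperplane ((innerₗ H).flip y).isLinear 0)

/-- The critical cone `tangentConeSet C p ∩ {z | ⟪z, y⟫ = 0}` with its equation relaxed to
`-δ ≤ ⟪z, y⟫`. The opposite inequality is not imposed, as it holds on the whole tangent cone when
`y` is normal to `C` at `p`. -/
def relaxedCriticalCone (C : Set H) (p y : H) (δ : ℝ) : Set H :=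
  tangentConeSet C p ∩ {z | -δ ≤ ⟪z, y⟫}

lemma isClosed_relaxedCriticalCone (C : Set H) (p y : H) (δ : ℝ) :
    IsClosed (relaxedCriticalCone C p y δ) :=
  isClosed_closure.inter (isClosed_le continuous_const (by fun_prop))

lemma convex_relaxedCriticalCone (hC : Convex ℝ C) (p y : H) (δ : ℝ) :
    Convex ℝ (relaxedCriticalCone C p y δ) :=
  (convex_tangentConeSet hC p).inter (convex_halfSpace_ge ((innerₗ H).flip y).isLinear (-δ))

lemma relaxedCriticalCone_mono (C : Set H) (p y : H) : Monotone (relaxedCriticalCone C p y) :=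
  fun _ _ hδ _ hz => ⟨hz.1, (neg_le_neg hδ).trans hz.2⟩

lemma IsProj.iInter_relaxedCriticalCone (hC : Convex ℝ C) (hp : IsProj C x p) {ι : Type*}
    {l : Filter ι} [l.NeBot] {δ : ι → ℝ} (hδ : ∀ n, 0 ≤ δ n) (hlim : Tendsto δ l (𝓝 0)) :
    ⋂ n, relaxedCriticalCone C p (x - p) (δ n) =
      tangentConeSet C p ∩ {z | ⟪z, x - p⟫ = 0} := by
  ext z
  simp only [relaxedCriticalCone, Set.mem_iInter, Set.mem_inter_iff, Set.mem_ofPred_eq]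
  constructor
  · intro hz
    have hzT : z ∈ tangentConeSet C p := (hz l.nonempty_of_neBot.some).1
    have hge : -0 ≤ ⟪z, x - p⟫ := le_of_tendsto' hlim.neg fun n => (hz n).2
    exact ⟨hzT, (hp.inner_nonpos_of_mem_tangentConeSet hC hzT).antisymm (neg_zero (G := ℝ) ▸ hge)⟩
  · rintro ⟨hzT, hzy⟩ n
    exact ⟨hzT, by linarith [hδ n]⟩

section DifferenceQuotients

variable {ι : Type*} {l : Filter ι} {t : ι → ℝ} {q v : ι → H} {h : H}

lemma eventually_mem_relaxedCriticalCone (hp : p ∈ C) (ht : Tendsto t l (𝓝[>] 0))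
    (hq : Tendsto q l (𝓝 h)) (hv : ∀ᶠ i in l, IsProj C (x + t i • q i) (p + t i • v i))
    {δ : ℝ} (hδ : 0 < δ) : ∀ᶠ i in l, v i ∈ relaxedCriticalCone C p (x - p) δ := by
  obtain ⟨ht₀, htpos⟩ := tendsto_nhdsWithin_iff.1 ht
  have hlim : Tendsto (fun i => t i * ‖q i‖ ^ 2) l (𝓝 0) := by
    simpa using ht₀.mul (hq.norm.pow 2)
  filter_upwards [htpos, hv, hlim.eventually_lt_const hδ] with i hti hvi hsmall
  have hcompare := hvi.mul_norm_sub_sq_le hti (z := 0) (by simpa using hp) (inner_zero_left _)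
  rw [sub_zero] at hcompare
  have hnonneg : 0 ≤ t i * ‖q i - v i‖ ^ 2 := mul_nonneg (le_of_lt hti) (sq_nonneg _)
  refine ⟨subset_closure ⟨t i, hti, hvi.1⟩, ?_⟩
  change -δ ≤ ⟪v i, x - p⟫
  linarith

lemma IsProj.eventually_norm_sub_lt_of_mem_feasibleDirections (hC : Convex ℝ C)
    (hp : IsProj C x p) (ht : Tendsto t l (𝓝[>] 0)) (hq : Tendsto q l (𝓝 h))
    (hv : ∀ᶠ i in l, IsProj C (x + t i • q i) (p + t i • v i)) {z : H}
    (hz : z ∈ feasibleDirections C p) (hzx : ⟪z, x - p⟫ = 0) {r : ℝ} (hr : ‖h - z‖ < r) :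
    ∀ᶠ i in l, ‖h - v i‖ < r := by
  have hlim : Tendsto (fun i => ‖h - q i‖ + ‖q i - z‖) l (𝓝 ‖h - z‖) := by
    simpa using (hq.const_sub h).norm.add (hq.sub_const z).norm
  filter_upwards [ht.eventually self_mem_nhdsWithin, hv, hlim.eventually_lt_const hr,
    ht.eventually (eventually_add_smul_mem_of_mem_feasibleDirections hC hp.1 hz)]
    with i hti hvi hri hzi
  have hvx : ⟪v i, x - p⟫ ≤ 0 :=
    hp.inner_nonpos_of_mem_tangentConeSet hC (subset_closure ⟨t i, hti, hvi.1⟩)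
  have hsq : ‖q i - v i‖ ^ 2 ≤ ‖q i - z‖ ^ 2 := by
    refine le_of_mul_le_mul_left ?_ hti
    linarith [hvi.mul_norm_sub_sq_le hti hzi hzx]
  calc ‖h - v i‖ ≤ ‖h - q i‖ + ‖q i - v i‖ := norm_sub_le_norm_sub_add_norm_sub ..
    _ ≤ ‖h - q i‖ + ‖q i - z‖ := by gcongr; exact le_of_sq_le_sq hsq (norm_nonneg _)
    _ < r := hri

theorem Polyhedric.tendsto_of_isProj [CompleteSpace H] (hpoly : Polyhedric C p (x - p))
    (hC : Convex ℝ C) (hp : IsProj C x p) (ht : Tendsto t l (𝓝[>] 0)) (hq : Tendsto q l (𝓝 h))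
    (hv : ∀ᶠ i in l, IsProj C (x + t i • q i) (p + t i • v i)) {w : H}
    (hw : IsProj (tangentConeSet C p ∩ {z | ⟪z, x - p⟫ = 0}) h w) : Tendsto v l (𝓝 w) := by
  let S : ℕ → Set H := fun n => relaxedCriticalCone C p (x - p) (1 / (n + 1))
  have hwS : IsProj (⋂ n, S n) h w := by
    rwa [hp.iInter_relaxedCriticalCone hC (fun n => by positivity)
      tendsto_one_div_add_atTop_nhds_zero_nat]
  have hS : Antitone S := fun m n hmn =>
    relaxedCriticalCone_mono C p (x - p) (Nat.one_div_le_one_div hmn)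
  refine hwS.tendsto_of_eventually_mem_of_eventually_norm_sub_lt hS
    (fun n => isClosed_relaxedCriticalCone ..) (fun n => convex_relaxedCriticalCone hC ..)
    (fun n => eventually_mem_relaxedCriticalCone hp.1 ht hq hv Nat.one_div_pos_of_nat)
    fun r hr => ?_
  have hw_closure : w ∈ closure (feasibleDirections C p ∩ {z | ⟪z, x - p⟫ = 0}) :=
    hpoly.subset hw.1
  obtain ⟨z, hzr, hz, hzx⟩ := mem_closure_iff_nhds.1 hw_closure {z | ‖h - z‖ < r}
    ((isOpen_lt (by fun_prop) continuous_const).mem_nhds hr)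
  exact hp.eventually_norm_sub_lt_of_mem_feasibleDirections hC ht hq hv hz hzx hzr

end DifferenceQuotients

end

theorem statement8_general
    {H : Type*} [NormedAddCommGroup H] [InnerProductSpace ℝ H] [CompleteSpace H]
    (C : Set H) (hconv : Convex ℝ C)
    (F : ℝ → H) (F' : H)
    (hF' : Tendsto (fun t : ℝ => (1 / t) • (F t - F 0))
      (nhdsWithin 0 (Set.Ioi 0)) (nhds F'))
    (u : ℝ → H)
    (hu : ∀ t : ℝ, 0 ≤ t → IsProj C (F t) (u t))
    (hpoly : Polyhedric C (u 0) (F 0 - u 0)) :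
    ∃ u' : H,
      Tendsto (fun t : ℝ => (1 / t) • (u t - u 0))
        (nhdsWithin 0 (Set.Ioi 0)) (nhds u')
      ∧ IsProj (tangentConeSet C (u 0) ∩ {z | ⟪z, F 0 - u 0⟫ = 0}) F' u' := by
  obtain ⟨w, hw⟩ := exists_isProj_tangentConeSet_inter hconv (hu 0 le_rfl).1 (F 0 - u 0) F'
  refine ⟨w, hpoly.tendsto_of_isProj hconv (hu 0 le_rfl) tendsto_id hF' ?_ hw, hw⟩
  filter_upwards [self_mem_nhdsWithin] with t ht
  have hcancel : ∀ a b : H, a + t • (1 / t) • (b - a) = b := fun a b => by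
    rw [smul_smul, mul_one_div_cancel (ne_of_gt ht), one_smul, add_sub_cancel]
  simpa only [id_eq, hcancel] using hu t (le_of_lt ht)

/-- Let `C ⊆ H` be nonempty closed convex, `F : [0,∞) → H`
right-differentiable at `t = 0` with derivative `F'(0)`, and
`u(t) := proj_C(F(t))`. Set `u₀ := u(0)` and `y := F(0) − u₀`. If `C` is
polyhedric at `u₀` for `y`, then `u` is right-differentiable at `t = 0` and
`u'(0) = proj_{T_C(u₀) ∩ (ℝy)^⊥}(F'(0))`. -/
theorem statement8
    {H : Type*} [NormedAddCommGroup H] [InnerProductSpace ℝ H] [CompleteSpace H]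
    (C : Set H) (hne : C.Nonempty) (hcl : IsClosed C) (hconv : Convex ℝ C)
    (F : ℝ → H) (F' : H)
    (hF' : Tendsto (fun t : ℝ => (1 / t) • (F t - F 0))
      (nhdsWithin 0 (Set.Ioi 0)) (nhds F'))
    (u : ℝ → H)
    (hu : ∀ t : ℝ, 0 ≤ t → IsProj C (F t) (u t))
    (hpoly : Polyhedric C (u 0) (F 0 - u 0)) :
    ∃ u' : H,
      Tendsto (fun t : ℝ => (1 / t) • (u t - u 0))
        (nhdsWithin 0 (Set.Ioi 0)) (nhds u')
      ∧ IsProj (tangentConeSet C (u 0) ∩ {z | ⟪z, F 0 - u 0⟫ = 0}) F' u' :=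
  statement8_general C hconv F F' hF' u hu hpoly
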